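/- arXiv:1806.02246 — 3 statements merged into one kernel-verified Lean document; each statement's English description precedes it below -/
import Mathlib

section
/- (Core density-ratio bound for the penalty-perturbation method.) Fix constants C, ρ, B > 0, an integer V ≥ 1, an integer N ≥ 1, c₁ > 0, θ > 0 with 2c₁ < (B/C)(ρ/N + 2θV), and iterations t = 1,…,T with penalty parameters η_t ≥ θ and noise parameters α_t ≥ 0. Let ℒ : ℝ → ℝ be twice differentiable with |ℒ'(z)| ≤ 1 and 0 < ℒ''(z) ≤ c₁ for all z, and let R : ℝ^d → ℝ be twice continuously differentiable with ∇²R(f) ⪰ I for all f. Let D = ((x_n, y_n))_{n=1}^B and D̂ = ((x̂_n, ŷ_n))_{n=1}^B with x̂_n = x_n and ŷ_n = y_n for n ≥ 2, ‖x_n‖₂ ≤ 1, ‖x̂_1‖₂ ≤ 1, and y_n, ŷ_1 ∈ {−1, 1}. For each t let f(t), f(t−1), λ(t−1), g_1(t−1),…,g_V(t−1) ∈ ℝ^d be arbitrary (the same for both datasets), and define ε_t(D) = −(C/(2η_t V B))·Σ_{n=1}^B y_n ℒ'(y_n f(t)ᵀx_n)·x_n − (1/(2η_t V))·((ρ/N)∇R(f(t))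 + 2λ(t−1)) − (1/(2V))·Σ_{j=1}^V (2f(t) − f(t−1) − g_j(t−1)), and H_t(D) = (C/(2η_t V B))·Σ_{n=1}^B ℒ''(y_n f(t)ᵀx_n)·x_n x_nᵀ + (ρ/(2η_t V N))·∇²R(f(t)) + I, and analogously ε_t(D̂), H_t(D̂) with (x̂_n, ŷ_n). Then each H_t(D), H_t(D̂) is invertible with positive determinant and ∏_{t=1}^T exp(α_t(‖ε_t(D̂)‖₂ − ‖ε_t(D)‖₂)) · (det H_t(D) / det H_t(D̂)) ≤ exp( Σ_{t=1}^T C·(1.4·c₁ + α_t)/(η_t V B) ). -/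
open scoped RealInnerProductSpace BigOperators Matrix


lemma aux_rank_one {d : ℕ} (P : Matrix (Fin d) (Fin d) ℝ) (hP : (P - 1).PosSemidef)
    (u : EuclideanSpace ℝ (Fin d)) (hu : ‖u‖ ≤ 1) (s : ℝ) (hs : 0 ≤ s) :
    0 < P.det ∧ P.det ≤ (P + s • Matrix.of (fun i j => u i * u j)).det ∧
    (P + s • Matrix.of (fun i j => u i * u j)).det ≤ P.det * (1 + s) := by
  have hPD : P.PosDef := by
    have := Matrix.PosDef.posSemidef_add hP (Matrix.PosDef.one (n := Fin d) (R := ℝ))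
    simpa using this
  have hdet : 0 < P.det := hPD.det_pos
  have hunit : IsUnit P.det := hdet.ne'.isUnit
  set v : Fin d → ℝ := fun i => u i with hv
  set w : Fin d → ℝ := P⁻¹ *ᵥ v with hw
  have hPw : P *ᵥ w = v := by
    rw [hw, Matrix.mulVec_mulVec, Matrix.mul_nonsing_inv _ hunit, Matrix.one_mulVec]
  have e : s • Matrix.of (fun i j => u i * u j)
      = Matrix.replicateCol Unit (s • v) * Matrix.replicateRow Unit v := by
    ext i j
    simp [Matrix.mul_apply, hv, mul_assoc]
  have hd : (P + s • Matrix.of (fun i j => u i * u j)).det = P.det * (1 + s * (v ⬝ᵥ w)) := by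
    rw [e, Matrix.det_add_replicateCol_mul_replicateRow hunit, Matrix.det_unique (n := Unit)]
    congr 1
    rw [Matrix.mul_assoc, ← Matrix.replicateCol_mulVec, Matrix.mulVec_smul, ← hw]
    simp [Matrix.mul_apply, dotProduct, Finset.mul_sum, mul_left_comm]
  have h1 : w ⬝ᵥ w ≤ v ⬝ᵥ w := by
    have := hP.dotProduct_mulVec_nonneg w
    rw [Matrix.sub_mulVec, hPw, Matrix.one_mulVec, dotProduct_sub] at this
    simp only [star_trivial] at this
    rw [dotProduct_comm v w]
    linarith
  have h0 : 0 ≤ w ⬝ᵥ w := Finset.sum_nonneg fun i _ => mul_self_nonneg _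
  have h2 : v ⬝ᵥ v ≤ 1 := by
    have : v ⬝ᵥ v = ‖u‖ ^ 2 := by
      rw [EuclideanSpace.real_norm_sq_eq]
      simp [dotProduct, hv, sq]
    rw [this]
    exact pow_le_one₀ (norm_nonneg _) hu
  have h3 : 0 ≤ (v - w) ⬝ᵥ (v - w) := Finset.sum_nonneg fun i _ => mul_self_nonneg _
  have h4 : v ⬝ᵥ w ≤ 1 := by
    rw [sub_dotProduct, dotProduct_sub, dotProduct_sub, dotProduct_comm w v] at h3
    linarith
  rw [hd]
  refine ⟨hdet, ?_, ?_⟩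
  · have : 0 ≤ s * (v ⬝ᵥ w) := mul_nonneg hs (h0.trans h1)
    nlinarith
  · have : s * (v ⬝ᵥ w) ≤ s * 1 := mul_le_mul_of_nonneg_left h4 hs
    exact mul_le_mul_of_nonneg_left (by linarith) hdet.le

lemma aux_outer {d : ℕ} (u : EuclideanSpace ℝ (Fin d)) :
    (Matrix.of (fun i j => u i * u j) : Matrix (Fin d) (Fin d) ℝ).PosSemidef := by
  have := Matrix.posSemidef_vecMulVec_self_star (n := Fin d) (fun i => u i)
  convert this using 1
  ext i j
  simp [Matrix.vecMulVec_apply]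

lemma aux_norm {d : ℕ} (u : EuclideanSpace ℝ (Fin d)) (hu : ‖u‖ ≤ 1) (y l : ℝ)
    (hy : y = -1 ∨ y = 1) (hl : |l| ≤ 1) : ‖(y * l) • u‖ ≤ 1 := by
  have : |y| = 1 := by rcases hy with rfl | rfl <;> simp
  rw [norm_smul, Real.norm_eq_abs, abs_mul, this, one_mul]
  exact mul_le_one₀ hl (norm_nonneg _) hu

/-- Core density-ratio bound for the penalty-perturbation method: over `T` iterations, the product
of per-iteration noise-density ratios and Jacobian-determinant ratios under two neighboring
datasets is bounded by `exp(Σ_t C(1.4c₁ + α_t)/(η_t V B))`. -/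
theorem penalty_perturbation_density_ratio_bound
    (d : ℕ) (C ρ : ℝ) (hC : 0 < C) (hρ : 0 < ρ)
    (B V N : ℕ) (hB : 1 ≤ B) (hV : 1 ≤ V) (hN : 1 ≤ N)
    (c₁ θ : ℝ) (hc₁ : 0 < c₁) (hθ : 0 < θ)
    (hcond : 2 * c₁ < ((B : ℝ) / C) * (ρ / (N : ℝ) + 2 * θ * (V : ℝ)))
    (T : ℕ) (η α : ℕ → ℝ)
    (hη : ∀ t ∈ Finset.Icc 1 T, θ ≤ η t) (hα : ∀ t ∈ Finset.Icc 1 T, 0 ≤ α t)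
    (L L' L'' : ℝ → ℝ)
    (hL' : ∀ z, HasDerivAt L (L' z) z) (hL'' : ∀ z, HasDerivAt L' (L'' z) z)
    (hL'bd : ∀ z, |L' z| ≤ 1) (hL''bd : ∀ z, 0 < L'' z ∧ L'' z ≤ c₁)
    (R : EuclideanSpace ℝ (Fin d) → ℝ) (hR : ContDiff ℝ 2 R)
    (gradR : EuclideanSpace ℝ (Fin d) → EuclideanSpace ℝ (Fin d))
    (hgradR : ∀ f, HasGradientAt R (gradR f) f)
    (hessR : EuclideanSpace ℝ (Fin d) → Matrix (Fin d) (Fin d) ℝ)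
    (hhessR : ∀ f, HasFDerivAt gradR
      (LinearMap.toContinuousLinearMap (Matrix.toEuclideanLin (hessR f))) f)
    (hhessRI : ∀ f, ((hessR f) - 1).PosSemidef)
    (x xh : Fin B → EuclideanSpace ℝ (Fin d)) (y yh : Fin B → ℝ)
    (hagree : ∀ n : Fin B, (n : ℕ) ≠ 0 → xh n = x n ∧ yh n = y n)
    (hx : ∀ n, ‖x n‖ ≤ 1) (hxh : ∀ n, ‖xh n‖ ≤ 1)
    (hy : ∀ n, y n = -1 ∨ y n = 1) (hyh : ∀ n, yh n = -1 ∨ yh n = 1)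
    (f lam : ℕ → EuclideanSpace ℝ (Fin d)) (g : ℕ → Fin V → EuclideanSpace ℝ (Fin d))
    (ε εh : ℕ → EuclideanSpace ℝ (Fin d)) (H Hh : ℕ → Matrix (Fin d) (Fin d) ℝ)
    (hε : ∀ t ∈ Finset.Icc 1 T, ε t =
      -((C / (2 * η t * (V : ℝ) * (B : ℝ))) • ∑ n, (y n * L' (y n * ⟪f t, x n⟫)) • x n)
      - (1 / (2 * η t * (V : ℝ))) • ((ρ / (N : ℝ)) • gradR (f t) + (2 : ℝ) • lam (t - 1))
      - (1 / (2 * (V : ℝ))) • ∑ j, ((2 : ℝ) • f t - f (t - 1) - g (t - 1) j))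
    (hεh : ∀ t ∈ Finset.Icc 1 T, εh t =
      -((C / (2 * η t * (V : ℝ) * (B : ℝ))) • ∑ n, (yh n * L' (yh n * ⟪f t, xh n⟫)) • xh n)
      - (1 / (2 * η t * (V : ℝ))) • ((ρ / (N : ℝ)) • gradR (f t) + (2 : ℝ) • lam (t - 1))
      - (1 / (2 * (V : ℝ))) • ∑ j, ((2 : ℝ) • f t - f (t - 1) - g (t - 1) j))
    (hH : ∀ t ∈ Finset.Icc 1 T, H t =
      (C / (2 * η t * (V : ℝ) * (B : ℝ))) •
          ∑ n, L'' (y n * ⟪f t, x n⟫) • Matrix.of (fun i j => x n i * x n j)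
        + (ρ / (2 * η t * (V : ℝ) * (N : ℝ))) • hessR (f t) + 1)
    (hHh : ∀ t ∈ Finset.Icc 1 T, Hh t =
      (C / (2 * η t * (V : ℝ) * (B : ℝ))) •
          ∑ n, L'' (yh n * ⟪f t, xh n⟫) • Matrix.of (fun i j => xh n i * xh n j)
        + (ρ / (2 * η t * (V : ℝ) * (N : ℝ))) • hessR (f t) + 1) :
    (∀ t ∈ Finset.Icc 1 T, 0 < (H t).det ∧ 0 < (Hh t).det) ∧
    ∏ t ∈ Finset.Icc 1 T, Real.exp (α t * (‖εh t‖ - ‖ε t‖)) * ((H t).det / (Hh t).det) ≤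
      Real.exp (∑ t ∈ Finset.Icc 1 T, C * (1.4 * c₁ + α t) / (η t * (V : ℝ) * (B : ℝ))) := by
  obtain ⟨b, rfl⟩ : ∃ b, B = b + 1 := ⟨B - 1, by omega⟩
  have key : ∀ t ∈ Finset.Icc 1 T, (0 < (H t).det ∧ 0 < (Hh t).det) ∧
      Real.exp (α t * (‖εh t‖ - ‖ε t‖)) * ((H t).det / (Hh t).det) ≤
      Real.exp (C * (1.4 * c₁ + α t) / (η t * (V : ℝ) * ((b + 1 : ℕ) : ℝ))) := by
    intro t ht
    have hηt : 0 < η t := hθ.trans_le (hη t ht)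
    have hαt := hα t ht
    have hVp : (0 : ℝ) < V := by exact_mod_cast hV
    have hNp : (0 : ℝ) < N := by exact_mod_cast hN
    have hBp : (0 : ℝ) < ((b + 1 : ℕ) : ℝ) := by exact_mod_cast hB
    have hk0 : C * (1.4 * c₁ + α t) / (η t * (V : ℝ) * ((b + 1 : ℕ) : ℝ))
        = (C / (2 * η t * (V : ℝ) * ((b + 1 : ℕ) : ℝ))) * (2.8 * c₁ + 2 * α t) := by
      field_simp
      ring
    have hHt := hH t ht
    have hHht := hHh t ht
    have hεt := hε t ht
    have hεht := hεh t ht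
    rw [hk0]
    have hk : 0 < C / (2 * η t * (V : ℝ) * ((b + 1 : ℕ) : ℝ)) := by positivity
    have hc : 0 < ρ / (2 * η t * (V : ℝ) * (N : ℝ)) := by positivity
    generalize C / (2 * η t * (V : ℝ) * ((b + 1 : ℕ) : ℝ)) = k at *
    generalize ρ / (2 * η t * (V : ℝ) * (N : ℝ)) = c at *
    have hag : ∀ n : Fin b, xh n.succ = x n.succ ∧ yh n.succ = y n.succ :=
      fun n => hagree n.succ (by simp)
    have hag1 := fun n => (hag n).1
    have hag2 := fun n => (hag n).2
    rw [Fin.sum_univ_succ] at hHt hHht hεt hεht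
    simp only [hag1, hag2] at hHht hεht
    set S : Matrix (Fin d) (Fin d) ℝ := ∑ n : Fin b, L'' (y n.succ * ⟪f t, x n.succ⟫) •
      Matrix.of (fun i j => x n.succ i * x n.succ j) with hS
    have hSp : S.PosSemidef := Matrix.posSemidef_sum _ fun n _ =>
      (aux_outer (x n.succ)).smul (hL''bd _).1.le
    set P : Matrix (Fin d) (Fin d) ℝ := k • S + c • hessR (f t) + 1 with hPdef
    have hP : (P - 1).PosSemidef := by
      have h1 : (hessR (f t)).PosSemidef := by
        have := (hhessRI (f t)).add (Matrix.PosSemidef.one (n := Fin d) (R := ℝ))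
        simpa using this
      have := (hSp.smul hk.le).add (h1.smul hc.le)
      simpa [hPdef] using this
    have hH2 : H t = P + (k * L'' (y 0 * ⟪f t, x 0⟫)) •
        Matrix.of (fun i j => x 0 i * x 0 j) := by
      rw [hHt, hPdef, smul_add, smul_smul]
      abel
    have hHh2 : Hh t = P + (k * L'' (yh 0 * ⟪f t, xh 0⟫)) •
        Matrix.of (fun i j => xh 0 i * xh 0 j) := by
      rw [hHht, hPdef, smul_add, smul_smul]
      abel
    have hl1 := hL''bd (y 0 * ⟪f t, x 0⟫)
    have hl2 := hL''bd (yh 0 * ⟪f t, xh 0⟫)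
    obtain ⟨hdP, a1, a2⟩ := aux_rank_one P hP (x 0) (hx 0) _ (mul_nonneg hk.le hl1.1.le)
    obtain ⟨-, b1, b2⟩ := aux_rank_one P hP (xh 0) (hxh 0) _ (mul_nonneg hk.le hl2.1.le)
    rw [← hH2] at a1 a2
    rw [← hHh2] at b1 b2
    have hp1 : 0 < (H t).det := hdP.trans_le a1
    have hp2 : 0 < (Hh t).det := hdP.trans_le b1
    refine ⟨⟨hp1, hp2⟩, ?_⟩
    have hratio : (H t).det / (Hh t).det ≤ Real.exp (k * c₁) := by
      rw [div_le_iff₀ hp2]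
      have h1 : 1 + k * L'' (y 0 * ⟪f t, x 0⟫) ≤ Real.exp (k * c₁) := by
        have := Real.add_one_le_exp (k * c₁)
        have := mul_le_mul_of_nonneg_left hl1.2 hk.le
        linarith
      calc (H t).det ≤ P.det * (1 + k * L'' (y 0 * ⟪f t, x 0⟫)) := a2
        _ ≤ P.det * Real.exp (k * c₁) := mul_le_mul_of_nonneg_left h1 hdP.le
        _ ≤ (Hh t).det * Real.exp (k * c₁) :=
          mul_le_mul_of_nonneg_right b1 (Real.exp_pos _).le
        _ = _ := mul_comm _ _
    have hnorm : ‖εh t‖ - ‖ε t‖ ≤ k * 2 := by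
      refine (norm_sub_norm_le _ _).trans ?_
      have : εh t - ε t = k • ((y 0 * L' (y 0 * ⟪f t, x 0⟫)) • x 0
          - (yh 0 * L' (yh 0 * ⟪f t, xh 0⟫)) • xh 0) := by
        rw [hεt, hεht]
        simp only [smul_add, smul_sub]
        abel
      rw [this, norm_smul, Real.norm_eq_abs, abs_of_pos hk]
      refine mul_le_mul_of_nonneg_left ?_ hk.le
      refine (norm_sub_le _ _).trans ?_
      have e1 := aux_norm (x 0) (hx 0) _ _ (hy 0) (hL'bd (y 0 * ⟪f t, x 0⟫))
      have e2 := aux_norm (xh 0) (hxh 0) _ _ (hyh 0) (hL'bd (yh 0 * ⟪f t, xh 0⟫))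
      linarith
    calc Real.exp (α t * (‖εh t‖ - ‖ε t‖)) * ((H t).det / (Hh t).det)
        ≤ Real.exp (α t * (k * 2)) * Real.exp (k * c₁) :=
          mul_le_mul (Real.exp_le_exp.2 (mul_le_mul_of_nonneg_left hnorm hαt)) hratio
            (div_pos hp1 hp2).le (Real.exp_pos _).le
      _ = Real.exp (α t * (k * 2) + k * c₁) := (Real.exp_add _ _).symm
      _ ≤ _ := by
        apply Real.exp_le_exp.2
        have := mul_pos hk hc₁
        linarith
  refine ⟨fun t ht => (key t ht).1, ?_⟩
  rw [Real.exp_sum]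
  refine Finset.prod_le_prod (fun t ht => ?_) fun t ht => (key t ht).2
  have := (key t ht).1
  exact mul_nonneg (Real.exp_pos _).le (div_pos this.1 this.2).le
end

section
/- Let H, G ∈ ℝ^{d×d} be symmetric with H ⪰ h·I for some h > 0, G of rank at most 2 with −c·I ⪯ G ⪯ c·I for some c satisfying 0 ≤ c ≤ h/2. Then H and H + G are invertible with positive determinants, and det(H) / det(H + G) ≤ (1 − c/h)^{−2} ≤ exp(2.8·c/h). -/
open scoped Matrix

lemma aux_scalar (x : ℝ) (h0 : 0 ≤ x) (h1 : x ≤ 1 / 2) :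
    ((1 - x)⁻¹) ^ 2 ≤ Real.exp (2.8 * x) := by
  have e2 : Real.exp (-0.7) ≤ 1 / 2 := by
    have h2 : (2 : ℝ) ≤ Real.exp 0.7 := by
      rw [← Real.log_le_iff_le_exp (by norm_num)]
      linarith [Real.log_two_lt_d9]
    rw [Real.exp_neg, one_div]
    exact inv_anti₀ (by norm_num) h2
  have hcv := convexOn_exp.2 (Set.mem_univ 0) (Set.mem_univ (-0.7))
    (by linarith : 0 ≤ 1 - 2 * x) (by linarith : 0 ≤ 2 * x) (by ring)
  simp only [smul_eq_mul, mul_zero, zero_add, Real.exp_zero, mul_one] at hcv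
  have e3 : Real.exp (2 * x * (-0.7)) ≤ 1 - x := by nlinarith
  have e4 : (1 - x)⁻¹ ≤ Real.exp (1.4 * x) := by
    have := inv_anti₀ (Real.exp_pos _) e3
    rw [← Real.exp_neg] at this
    have e : -(2 * x * (-0.7)) = 1.4 * x := by ring
    rw [e] at this
    exact this
  have hpos : 0 ≤ (1 - x)⁻¹ := inv_nonneg.2 (by linarith)
  calc ((1 - x)⁻¹) ^ 2 ≤ (Real.exp (1.4 * x)) ^ 2 := by gcongr
    _ = Real.exp (2.8 * x) := by
      rw [← Real.exp_nat_mul]; congr 1; push_cast; ring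

lemma aux_det {d : ℕ} (M : Matrix (Fin d) (Fin d) ℝ) (hM : M.IsHermitian) (t : ℝ)
    (ht0 : 0 ≤ t) (ht1 : t ≤ 1) (hr : M.rank ≤ 2)
    (hp : (M + t • (1 : Matrix (Fin d) (Fin d) ℝ)).PosSemidef) :
    (1 - t) ^ 2 ≤ (1 + M).det := by
  have hdet : (1 + M).det = ∏ i, (1 + hM.eigenvalues i) := by
    have hc := congrArg (Polynomial.eval (-1)) hM.charpoly_eq
    rw [Matrix.eval_charpoly, Polynomial.eval_prod] at hc
    have e : Matrix.scalar (Fin d) (-1 : ℝ) - M = -(1 + M) := by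
      rw [map_neg, map_one]; abel
    rw [e, Matrix.det_neg] at hc
    have e2 : ∀ i, Polynomial.eval (-1 : ℝ) (Polynomial.X - Polynomial.C (hM.eigenvalues i))
        = (-1) * (1 + hM.eigenvalues i) := by
      intro i; simp; ring
    simp only [RCLike.ofReal_real_eq_id, id] at hc
    rw [Finset.prod_congr rfl (fun i _ => e2 i), Finset.prod_mul_distrib] at hc
    simp only [Finset.prod_const, Finset.card_univ] at hc
    exact mul_left_cancel₀ (pow_ne_zero _ (by norm_num)) hc
  have hev : ∀ i, -t ≤ hM.eigenvalues i := by
    intro i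
    have h1 := hp.dotProduct_mulVec_nonneg (hM.eigenvectorBasis i).ofLp
    have h2 := hM.eigenvectorBasis.orthonormal.1 i
    have h3 : star (hM.eigenvectorBasis i).ofLp ⬝ᵥ (hM.eigenvectorBasis i).ofLp = 1 := by
      have := EuclideanSpace.inner_eq_star_dotProduct (𝕜 := ℝ) (hM.eigenvectorBasis i)
        (hM.eigenvectorBasis i)
      rw [real_inner_self_eq_norm_sq, h2] at this
      rw [dotProduct_comm, ← this]; norm_num
    rw [Matrix.add_mulVec, hM.mulVec_eigenvectorBasis, Matrix.smul_mulVec, Matrix.one_mulVec,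
      dotProduct_add, dotProduct_smul, dotProduct_smul, h3] at h1
    simp at h1
    linarith
  rw [hdet]
  have hcard : (Finset.univ.filter (fun i => hM.eigenvalues i ≠ 0)).card ≤ 2 := by
    rw [hM.rank_eq_card_non_zero_eigs, Fintype.card_subtype] at hr
    exact hr
  have hsub : ∏ i, (1 + hM.eigenvalues i) =
      ∏ i ∈ Finset.univ.filter (fun i => hM.eigenvalues i ≠ 0), (1 + hM.eigenvalues i) := by
    symm
    apply Finset.prod_subset (Finset.filter_subset _ _)
    intro i _ hi
    simp at hi
    simp [hi]
  rw [hsub]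
  calc (1 - t) ^ 2 ≤ (1 - t) ^ (Finset.univ.filter (fun i => hM.eigenvalues i ≠ 0)).card :=
        pow_le_pow_of_le_one (by linarith) (by linarith) hcard
    _ = ∏ i ∈ Finset.univ.filter (fun i => hM.eigenvalues i ≠ 0), (1 - t) := by simp
    _ ≤ _ := Finset.prod_le_prod (fun i _ => by linarith) (fun i _ => by linarith [hev i])

lemma aux_factor {d : ℕ} (H : Matrix (Fin d) (Fin d) ℝ) (hH : H.PosSemidef) :
    ∃ B : Matrix (Fin d) (Fin d) ℝ, H = Bᴴ * B := by
  open scoped MatrixOrder in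
  exact CStarAlgebra.nonneg_iff_eq_star_mul_self.mp hH.nonneg

/-- Jacobian-determinant ratio bound: if `H ⪰ h·I` with `h > 0`, and `G` is symmetric of rank at
most 2 with `-c·I ⪯ G ⪯ c·I` and `0 ≤ c ≤ h/2`, then `H` and `H + G` are invertible with
positive determinants and `det(H)/det(H+G) ≤ (1 - c/h)⁻² ≤ exp(2.8·c/h)`. -/
theorem det_ratio_bound (d : ℕ) (H G : Matrix (Fin d) (Fin d) ℝ)
    (hHsymm : Hᵀ = H) (hGsymm : Gᵀ = G) (h c : ℝ) (hh : 0 < h)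
    (hH : (H - h • (1 : Matrix (Fin d) (Fin d) ℝ)).PosSemidef)
    (hGrank : G.rank ≤ 2)
    (hGu : (c • (1 : Matrix (Fin d) (Fin d) ℝ) - G).PosSemidef)
    (hGl : (G + c • (1 : Matrix (Fin d) (Fin d) ℝ)).PosSemidef)
    (hc0 : 0 ≤ c) (hch : c ≤ h / 2) :
    0 < H.det ∧ 0 < (H + G).det ∧
      H.det / (H + G).det ≤ ((1 - c / h)⁻¹) ^ 2 ∧
      ((1 - c / h)⁻¹) ^ 2 ≤ Real.exp (2.8 * (c / h)) := by
  have ht0 : 0 ≤ c / h := by positivity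
  have ht1 : c / h ≤ 1 / 2 := by rw [div_le_iff₀ hh]; linarith
  have hHd : H.PosDef := by
    have := (Matrix.PosDef.one (n := Fin d) (R := ℝ)).smul hh |>.add_posSemidef hH
    simpa using this
  have hdH : 0 < H.det := hHd.det_pos
  obtain ⟨B, hB⟩ := aux_factor H hHd.posSemidef
  have hBu : IsUnit B.det := by
    rw [isUnit_iff_ne_zero]
    intro h0
    rw [hB, Matrix.det_mul, h0, mul_zero] at hdH
    exact lt_irrefl _ hdH
  have hBi : B * B⁻¹ = 1 := Matrix.mul_nonsing_inv B hBu
  have hBi' : B⁻¹ * B = 1 := Matrix.nonsing_inv_mul B hBu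
  have hBt : (B⁻¹)ᴴ * Bᴴ = 1 := by rw [← Matrix.conjTranspose_mul, hBi, Matrix.conjTranspose_one]
  have hBt' : Bᴴ * (B⁻¹)ᴴ = 1 := by
    rw [← Matrix.conjTranspose_mul, hBi', Matrix.conjTranspose_one]
  have hG : G.IsHermitian := by
    rw [Matrix.IsHermitian, Matrix.conjTranspose_eq_transpose_of_trivial, hGsymm]
  set M := (B⁻¹)ᴴ * G * B⁻¹ with hMdef
  have hM : M.IsHermitian := Matrix.isHermitian_conjTranspose_mul_mul _ hG
  have hMr : M.rank ≤ 2 :=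
    (Matrix.rank_mul_le_left _ _).trans ((Matrix.rank_mul_le_right _ _).trans hGrank)
  have hI : (B⁻¹)ᴴ * H * B⁻¹ = 1 := by
    rw [hB, ← Matrix.mul_assoc, hBt, Matrix.one_mul, hBi]
  have hMp : (M + (c / h) • (1 : Matrix (Fin d) (Fin d) ℝ)).PosSemidef := by
    have h1 := (hGl.add (hH.smul ht0)).conjTranspose_mul_mul_same B⁻¹
    have e : G + c • (1 : Matrix (Fin d) (Fin d) ℝ) + (c / h) • (H - h • 1) = G + (c / h) • H := by
      rw [smul_sub, smul_smul, div_mul_cancel₀ _ hh.ne']; abel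
    rw [e, Matrix.mul_add, Matrix.add_mul, Matrix.mul_smul, Matrix.smul_mul, hI] at h1
    exact h1
  have hdet := aux_det M hM (c / h) ht0 (by linarith) hMr hMp
  have hHG : (H + G).det = H.det * (1 + M).det := by
    have e : H + G = Bᴴ * (1 + M) * B := by
      have : Bᴴ * M * B = G := by
        calc Bᴴ * M * B = (Bᴴ * (B⁻¹)ᴴ) * G * (B⁻¹ * B) := by
              rw [hMdef]; simp only [Matrix.mul_assoc]
          _ = G := by rw [hBt', hBi', Matrix.one_mul, Matrix.mul_one]
      rw [Matrix.mul_add, Matrix.add_mul, this, Matrix.mul_one, ← hB]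
    rw [e, Matrix.det_mul, Matrix.det_mul, hB, Matrix.det_mul]; ring
  have hp : 0 < (1 - c / h) ^ 2 := pow_pos (by linarith) 2
  have hp2 : 0 < (1 + M).det := hp.trans_le hdet
  refine ⟨hdH, hHG ▸ mul_pos hdH hp2, ?_, aux_scalar _ ht0 ht1⟩
  rw [hHG, div_mul_eq_div_div, div_self hdH.ne', one_div, inv_pow]
  exact inv_anti₀ hp hdet
end

section
/- Let O : ℝ^d → ℝ be convex and continuously differentiable, let η > 0, let V be a positive integer, and let λ, c_1,…,c_V ∈ ℝ^d. For ε ∈ ℝ^d define L_ε : ℝ^d → ℝ by L_ε(f) = O(f) + 2·λᵀf + η·Σ_{j=1}^V ‖f + ε − c_j‖₂². Then: (1) for every ε ∈ ℝ^d, L_ε is strictly convex and has a unique minimizer g(ε) ∈ ℝ^d; and (2) the map g : ℝ^d → ℝ^d is a bijection, whose inverse is given explicitly by f ↦ −(1/(2ηV))·(∇O(f) + 2λ) − f + (1/V)·Σ_{j=1}^V c_j. -/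
open scoped RealInnerProductSpace BigOperators

theorem aux_line {d : ℕ} {O : EuclideanSpace ℝ (Fin d) → ℝ} {g x : EuclideanSpace ℝ (Fin d)}
    (h : HasGradientAt O g x) (v : EuclideanSpace ℝ (Fin d)) :
    HasDerivAt (fun t : ℝ => O (x + t • v)) ⟪g, v⟫ 0 := by
  have h1 : HasDerivAt (fun t : ℝ => x + t • v) v 0 := by
    simpa using ((hasDerivAt_id (0 : ℝ)).smul_const v).const_add x
  have h2 : HasFDerivAt O (InnerProductSpace.toDual ℝ _ g) (x + (0 : ℝ) • v) := by
    simpa using h.hasFDerivAt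
  simpa [Function.comp_def] using h2.comp_hasDerivAt (0 : ℝ) h1

theorem aux_subgrad {d : ℕ} {O : EuclideanSpace ℝ (Fin d) → ℝ} {g x : EuclideanSpace ℝ (Fin d)}
    (hc : ConvexOn ℝ Set.univ O) (h : HasGradientAt O g x) (f : EuclideanSpace ℝ (Fin d)) :
    O x + ⟪g, f - x⟫ ≤ O f := by
  have h1 := aux_line h (f - x)
  have h2 : ConvexOn ℝ Set.univ (fun t : ℝ => O (x + t • (f - x))) := by
    refine ⟨convex_univ, fun s _ t _ a b ha hb hab => ?_⟩
    have := hc.2 (Set.mem_univ (x + s • (f - x))) (Set.mem_univ (x + t • (f - x))) ha hb hab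
    have e : x + (a • s + b • t) • (f - x)
        = a • (x + s • (f - x)) + b • (x + t • (f - x)) := by
      have hb' : b = 1 - a := by linarith
      subst hb'
      simp only [smul_eq_mul]
      module
    simpa only [e] using this
  have h3 := h2.le_slope_of_hasDerivAt (Set.mem_univ 0) (Set.mem_univ 1) one_pos h1
  simp [slope_def_field] at h3
  linarith

theorem aux_quad {d V : ℕ} (η : ℝ) (lam : EuclideanSpace ℝ (Fin d))
    (c : Fin V → EuclideanSpace ℝ (Fin d)) (ε x v : EuclideanSpace ℝ (Fin d)) :
    2 * ⟪lam, x + v⟫ + η * ∑ j, ‖x + v + ε - c j‖ ^ 2 =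
      2 * ⟪lam, x⟫ + η * ∑ j, ‖x + ε - c j‖ ^ 2
      + ⟪(2 : ℝ) • lam + (2 * η) • ∑ j, (x + ε - c j), v⟫ + η * V * ‖v‖ ^ 2 := by
  have e : ∀ j, ‖x + v + ε - c j‖ ^ 2
      = ‖x + ε - c j‖ ^ 2 + 2 * ⟪x + ε - c j, v⟫ + ‖v‖ ^ 2 := by
    intro j
    rw [show x + v + ε - c j = (x + ε - c j) + v by abel, norm_add_sq_real]
  simp only [e, Finset.sum_add_distrib, ← Finset.mul_sum, inner_add_left, inner_add_right,
    inner_smul_left, sum_inner]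
  simp
  ring

/-- The penalty-perturbed primal update `L_ε(f) = O(f) + 2λᵀf + η·Σⱼ ‖f + ε - cⱼ‖²` is strictly
convex with a unique minimizer `g(ε)` for every noise `ε`, and the noise-to-output map `g` is a
bijection whose inverse is `f ↦ -(1/(2ηV))(∇O(f) + 2λ) - f + (1/V)·Σⱼ cⱼ`. -/
theorem noise_to_output_bijective (d V : ℕ) (hV : 0 < V)
    (O : EuclideanSpace ℝ (Fin d) → ℝ) (gradO : EuclideanSpace ℝ (Fin d) → EuclideanSpace ℝ (Fin d))
    (hOconv : ConvexOn ℝ Set.univ O) (hOdiff : ContDiff ℝ 1 O)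
    (hgrad : ∀ f, HasGradientAt O (gradO f) f)
    (η : ℝ) (hη : 0 < η) (lam : EuclideanSpace ℝ (Fin d)) (c : Fin V → EuclideanSpace ℝ (Fin d)) :
    let L : EuclideanSpace ℝ (Fin d) → EuclideanSpace ℝ (Fin d) → ℝ := fun ε f =>
      O f + 2 * ⟪lam, f⟫ + η * ∑ j, ‖f + ε - c j‖ ^ 2
    let inv : EuclideanSpace ℝ (Fin d) → EuclideanSpace ℝ (Fin d) := fun f =>
      -((1 / (2 * η * V)) • (gradO f + (2 : ℝ) • lam)) - f + (1 / (V : ℝ)) • ∑ j, c j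
    (∀ ε, StrictConvexOn ℝ Set.univ (L ε)) ∧
    ∃ g : EuclideanSpace ℝ (Fin d) → EuclideanSpace ℝ (Fin d),
      (∀ ε f, f ≠ g ε → L ε (g ε) < L ε f) ∧
      Function.Bijective g ∧
      Function.LeftInverse inv g ∧ Function.RightInverse inv g := by
  intro L inv
  have hVr : (0 : ℝ) < V := by exact_mod_cast hV
  have hηV : 0 < η * V := mul_pos hη hVr
  let G : EuclideanSpace ℝ (Fin d) → EuclideanSpace ℝ (Fin d) → EuclideanSpace ℝ (Fin d) :=
    fun ε x => gradO x + ((2 : ℝ) • lam + (2 * η) • ∑ j, (x + ε - c j))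
  have key : ∀ ε x f, L ε x + ⟪G ε x, f - x⟫ + η * V * ‖f - x‖ ^ 2 ≤ L ε f := by
    intro ε x f
    have h1 := aux_subgrad hOconv (hgrad x) f
    have h2 := aux_quad η lam c ε x (f - x)
    rw [add_sub_cancel] at h2
    simp only [L, G]
    rw [inner_add_left]
    linarith
  have keyS : ∀ ε x f, f ≠ x → L ε x + ⟪G ε x, f - x⟫ < L ε f := by
    intro ε x f hne
    have h1 := key ε x f
    have h2 : 0 < ‖f - x‖ := norm_pos_iff.2 (sub_ne_zero.2 hne)
    have : 0 < η * V * ‖f - x‖ ^ 2 := by positivity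
    linarith
  have hG : ∀ ε x, G ε x = (2 * η * V) • (ε - inv x) := by
    intro ε x
    have h1 : ∑ j, (x + ε - c j) = (V : ℝ) • (x + ε) - ∑ j, c j := by
      simp [Finset.sum_sub_distrib, Nat.cast_smul_eq_nsmul]
    simp only [G, inv, h1]
    generalize ∑ j, c j = C
    match_scalars <;> field_simp
  have hG0 : ∀ ε x, G ε x = 0 ↔ inv x = ε := by
    intro ε x
    rw [hG, smul_eq_zero, sub_eq_zero]
    constructor
    · rintro (h | h)
      · exfalso
        have : 0 < 2 * η * V := by positivity
        linarith
      · exact h.symm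
    · exact fun h => Or.inr h.symm
  have hmin : ∀ ε x, inv x = ε → ∀ f, f ≠ x → L ε x < L ε f := by
    intro ε x h f hne
    have := keyS ε x f hne
    rw [(hG0 ε x).2 h] at this
    simpa using this
  have hex : ∀ ε, ∃ x, inv x = ε := by
    intro ε
    have hcont : Continuous (L ε) := by
      have := hOdiff.continuous
      fun_prop
    obtain ⟨x, hx⟩ : ∃ x, ∀ f, L ε x ≤ L ε f := by
      refine hcont.exists_forall_le' 0 ?_
      have hev := (tendsto_norm_cocompact_atTop (E := EuclideanSpace ℝ (Fin d))).eventually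
        (Filter.eventually_ge_atTop (‖G ε 0‖ / (η * V)))
      filter_upwards [hev] with f hf
      have h1 := key ε 0 f
      rw [sub_zero] at h1
      have h2 : -(‖G ε 0‖ * ‖f‖) ≤ ⟪G ε 0, f⟫ := neg_le_of_abs_le (abs_real_inner_le_norm _ _)
      rw [div_le_iff₀ hηV] at hf
      nlinarith [mul_le_mul_of_nonneg_right hf (norm_nonneg f)]
    refine ⟨x, (hG0 ε x).1 ?_⟩
    set v := G ε x with hv
    have hd : HasDerivAt (fun t : ℝ => L ε (x + t • v)) ⟪G ε x, v⟫ 0 := by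
      have h1 := aux_line (hgrad x) v
      have e : (fun t : ℝ => L ε (x + t • v)) = fun t : ℝ => O (x + t • v) +
          (2 * ⟪lam, x⟫ + η * ∑ j, ‖x + ε - c j‖ ^ 2
          + t * ⟪(2 : ℝ) • lam + (2 * η) • ∑ j, (x + ε - c j), v⟫
          + η * V * ‖v‖ ^ 2 * t ^ 2) := by
        funext t
        have h2 := aux_quad η lam c ε x (t • v)
        rw [inner_smul_right, norm_smul, mul_pow, Real.norm_eq_abs, sq_abs] at h2
        simp only [L]
        linarith
      rw [e]
      have h3 := h1.add (((((hasDerivAt_id (0 : ℝ)).mul_const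
        ⟪(2 : ℝ) • lam + (2 * η) • ∑ j, (x + ε - c j), v⟫)).const_add
          (2 * ⟪lam, x⟫ + η * ∑ j, ‖x + ε - c j‖ ^ 2)).add
        ((hasDerivAt_pow 2 (0 : ℝ)).const_mul (η * V * ‖v‖ ^ 2)))
      refine h3.congr_deriv ?_
      simp only [G]
      rw [inner_add_left (gradO x)]
      simp
    have hlm : IsLocalMin (fun t : ℝ => L ε (x + t • v)) 0 := by
      refine Filter.Eventually.of_forall fun t => ?_
      simpa using hx (x + t • v)
    have := hlm.hasDerivAt_eq_zero hd
    rw [← hv] at this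
    exact inner_self_eq_zero.1 this
  refine ⟨fun ε => ⟨convex_univ, ?_⟩, ?_⟩
  · intro x _ y _ hxy a b ha hb hab
    have hb' : b = 1 - a := by linarith
    set z := a • x + b • y with hz
    have e1 : x - z = b • (x - y) := by
      rw [hz, show a = 1 - b by linarith]
      module
    have e2 : y - z = (-a) • (x - y) := by
      rw [hz, hb']
      module
    have hxy' : x - y ≠ 0 := sub_ne_zero.2 hxy
    have h1 := keyS ε z x (by
      rw [← sub_ne_zero, e1]
      exact smul_ne_zero hb.ne' hxy')
    have h2 := keyS ε z y (by
      rw [← sub_ne_zero, e2]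
      exact smul_ne_zero (neg_ne_zero.2 ha.ne') hxy')
    rw [e1, inner_smul_right] at h1
    rw [e2, inner_smul_right] at h2
    simp only [smul_eq_mul]
    have h3 := mul_lt_mul_of_pos_left h1 ha
    have h4 := mul_lt_mul_of_pos_left h2 hb
    have h5 : L ε z = a * L ε z + b * L ε z := by rw [← add_mul, hab, one_mul]
    nlinarith
  · choose g hg using hex
    have hl : Function.LeftInverse inv g := hg
    have hr : Function.RightInverse inv g := by
      intro x
      by_contra hne
      have h1 := hmin (inv x) x rfl _ hne
      have h2 := hmin (inv x) (g (inv x)) (hg _) x (Ne.symm hne)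
      linarith
    exact ⟨g, fun ε f hf => hmin ε (g ε) (hg ε) f hf, ⟨hl.injective, hr.surjective⟩, hl, hr⟩
end
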